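/- (Theorem 2.) When privacy is required only against Bob, who computes a function based on a single transmission from Alice: the triple (p_XY, f, g) is asymptotically securely computable with no interaction if and only if it is perfectly securely computable. -/

import Mathlib

open scoped BigOperators

/-- A probability mass function on a finite type, given as a real-valued function. -/
def IsPMF {Ω : Type*} [Fintype Ω] (p : Ω → ℝ) : Prop :=
  (∀ ω, 0 ≤ p ω) ∧ ∑ ω, p ω = 1

open Classical in
/-- Probability of an event under a pmf on a finite type. -/
noncomputable def probOf {Ω : Type*} [Fintype Ω] (p : Ω → ℝ) (E : Ω → Prop) : ℝ :=
  ∑ ω, if E ω then p ω else 0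

/-- Distribution (pushforward) of a random variable `A` under pmf `p`. -/
noncomputable def distOf {Ω β : Type*} [Fintype Ω] [DecidableEq β]
    (p : Ω → ℝ) (A : Ω → β) : β → ℝ :=
  fun b => ∑ ω, if A ω = b then p ω else 0

/-- Shannon entropy (in nats) of a distribution on a finite type. -/
noncomputable def entD {β : Type*} [Fintype β] (q : β → ℝ) : ℝ :=
  -∑ b, q b * Real.log (q b)

/-- Shannon entropy H(A) of a random variable `A` under pmf `p`. -/
noncomputable def entRV {Ω β : Type*} [Fintype Ω] [Fintype β] [DecidableEq β]
    (p : Ω → ℝ) (A : Ω → β) : ℝ :=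
  entD (distOf p A)

/-- Conditional Shannon entropy H(A | C). -/
noncomputable def condEnt {Ω β γ : Type*} [Fintype Ω] [Fintype β] [DecidableEq β]
    [Fintype γ] [DecidableEq γ] (p : Ω → ℝ) (A : Ω → β) (C : Ω → γ) : ℝ :=
  entRV p (fun ω => (A ω, C ω)) - entRV p C

/-- Mutual information I(A; B). -/
noncomputable def mutInfo {Ω β γ : Type*} [Fintype Ω] [Fintype β] [DecidableEq β]
    [Fintype γ] [DecidableEq γ] (p : Ω → ℝ) (A : Ω → β) (B : Ω → γ) : ℝ :=
  entRV p A + entRV p B - entRV p (fun ω => (A ω, B ω))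

/-- Conditional mutual information I(A; B | C). -/
noncomputable def condMutInfo {Ω β γ δ : Type*} [Fintype Ω] [Fintype β] [DecidableEq β]
    [Fintype γ] [DecidableEq γ] [Fintype δ] [DecidableEq δ]
    (p : Ω → ℝ) (A : Ω → β) (B : Ω → γ) (C : Ω → δ) : ℝ :=
  entRV p (fun ω => (A ω, C ω)) + entRV p (fun ω => (B ω, C ω))
    - entRV p (fun ω => (A ω, B ω, C ω)) - entRV p C

/-- Privacy against Alice with respect to `g` of a transition kernel `k(m|x,y)`,
for the function `f` being computed. -/
def PrivAlice {𝒳 𝒴 𝒵 𝒢 ℳ : Type*} (f : 𝒳 → 𝒴 → 𝒵) (g : 𝒳 → 𝒴 → 𝒢)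
    (k : 𝒳 → 𝒴 → ℳ → ℝ) : Prop :=
  ∀ x y₁ y₂, g x y₁ ≠ g x y₂ → f x y₁ = f x y₂ → ∀ m, k x y₁ m = k x y₂ m

/-- Privacy against Bob with respect to `h` of a transition kernel `k(m|x,y)`,
for the function `f` being computed. -/
def PrivBob {𝒳 𝒴 𝒵 ℋ ℳ : Type*} (f : 𝒳 → 𝒴 → 𝒵) (h : 𝒳 → 𝒴 → ℋ)
    (k : 𝒳 → 𝒴 → ℳ → ℝ) : Prop :=
  ∀ x₁ x₂ y, h x₁ y ≠ h x₂ y → f x₁ y = f x₂ y → ∀ m, k x₁ y m = k x₂ y m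

/-- Joint law of `(XYⁿ, M, Zⁿ)` induced by `n` i.i.d. copies of `pXY`, Alice's single
transmission kernel `a(m|xⁿ)` and Bob's output kernel `b(zⁿ|m,yⁿ)`. -/
noncomputable def jointNI {𝒳 𝒴 𝒵 : Type} (pXY : 𝒳 × 𝒴 → ℝ) (n mM : ℕ)
    (a : (Fin n → 𝒳) → Fin mM → ℝ)
    (b : Fin mM → (Fin n → 𝒴) → (Fin n → 𝒵) → ℝ) :
    (Fin n → 𝒳 × 𝒴) × Fin mM × (Fin n → 𝒵) → ℝ :=
  fun ω => (∏ i, pXY (ω.1 i)) * a (fun i => (ω.1 i).1) ω.2.1 *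
    b ω.2.1 (fun i => (ω.1 i).2) ω.2.2

/-- The triple `(pXY, f, g)` is asymptotically securely computable with no interaction:
for every `ε > 0` there are a blocklength `n`, a message alphabet `Fin mM`, a transmission
kernel for Alice and an output kernel for Bob such that `P(Zⁿ ≠ Fⁿ) ≤ ε` and
`I(M; Gⁿ | Zⁿ, Yⁿ) ≤ n ε`. -/
def AsympSecurelyComputableNI {𝒳 𝒴 𝒵 𝒢 : Type}
    [Fintype 𝒳] [DecidableEq 𝒳] [Fintype 𝒴] [DecidableEq 𝒴]
    [Fintype 𝒵] [DecidableEq 𝒵] [Fintype 𝒢] [DecidableEq 𝒢]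
    (pXY : 𝒳 × 𝒴 → ℝ) (f : 𝒳 → 𝒴 → 𝒵) (g : 𝒳 → 𝒴 → 𝒢) : Prop :=
  ∀ ε : ℝ, 0 < ε → ∃ (n mM : ℕ), 0 < n ∧
    ∃ (a : (Fin n → 𝒳) → Fin mM → ℝ) (b : Fin mM → (Fin n → 𝒴) → (Fin n → 𝒵) → ℝ),
      (∀ xv, (∀ m, 0 ≤ a xv m) ∧ ∑ m, a xv m = 1) ∧
      (∀ m yv, (∀ z, 0 ≤ b m yv z) ∧ ∑ z, b m yv z = 1) ∧
      probOf (jointNI pXY n mM a b)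
        (fun ω => ω.2.2 ≠ fun i => f (ω.1 i).1 (ω.1 i).2) ≤ ε ∧
      condMutInfo (jointNI pXY n mM a b)
        (fun ω => ω.2.1)
        (fun ω => fun i => g (ω.1 i).1 (ω.1 i).2)
        (fun ω => (ω.2.2, fun i => (ω.1 i).2)) ≤ n * ε

/-- The triple `(pXY, f, g)` is perfectly securely computable: there is a finite `U` and a
conditional distribution `p(u|x,y)` such that `U − X − Y` is a Markov chain
(`I(U; Y | X) = 0`), `H(F | U, Y) = 0` and `I(U; G | F, Y) = 0`. -/
def PerfectlySecurelyComputableNI {𝒳 𝒴 𝒵 𝒢 : Type}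
    [Fintype 𝒳] [DecidableEq 𝒳] [Fintype 𝒴] [DecidableEq 𝒴]
    [Fintype 𝒵] [DecidableEq 𝒵] [Fintype 𝒢] [DecidableEq 𝒢]
    (pXY : 𝒳 × 𝒴 → ℝ) (f : 𝒳 → 𝒴 → 𝒵) (g : 𝒳 → 𝒴 → 𝒢) : Prop :=
  ∃ (u : ℕ) (pU : 𝒳 → 𝒴 → Fin u → ℝ),
    (∀ x y, (∀ v, 0 ≤ pU x y v) ∧ ∑ v, pU x y v = 1) ∧
    condMutInfo (fun ω : (𝒳 × 𝒴) × Fin u => pXY ω.1 * pU ω.1.1 ω.1.2 ω.2)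
      (fun ω => ω.2) (fun ω => ω.1.2) (fun ω => ω.1.1) = 0 ∧
    condEnt (fun ω : (𝒳 × 𝒴) × Fin u => pXY ω.1 * pU ω.1.1 ω.1.2 ω.2)
      (fun ω => f ω.1.1 ω.1.2) (fun ω => (ω.2, ω.1.2)) = 0 ∧
    condMutInfo (fun ω : (𝒳 × 𝒴) × Fin u => pXY ω.1 * pU ω.1.1 ω.1.2 ω.2)
      (fun ω => ω.2) (fun ω => g ω.1.1 ω.1.2) (fun ω => (f ω.1.1 ω.1.2, ω.1.2)) = 0

/-!
A block protocol is turned into one single-letter channel for each coordinate. Once the message and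
the other coordinates of `Yⁿ` are fixed, Bob's decoder, which may be taken deterministic, becomes a
map `Yᵢ ↦ Zᵢ`, that is, a letter `U` of the alphabet `𝒴 → 𝒵`, whose size does not depend on `n`.
Alice can sample `U` from `Xᵢ` alone by drawing the other coordinates herself, so `U − Xᵢ − Yᵢ` is a
Markov chain. By subadditivity of conditional entropy and Fano's inequality, the average over `i` of
the information that `(U, Yᵢ)` gives about `Gᵢ` beyond `(Fᵢ, Yᵢ)` is at most `I(M; Gⁿ | Zⁿ, Yⁿ) / n`
up to an error that vanishes with `P(Zⁿ ≠ Fⁿ)`. The channels from `𝒳` to `𝒴 → 𝒵` form a compact set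
on which the probability of error and the leaked information are continuous, so some channel makes
both of them vanish. Conversely, a perfectly secure `U` is a protocol of blocklength one.
-/

section FinitePMF

variable {Ω Ω' α β γ Φ : Type*} [Fintype Ω] [Fintype Ω'] [DecidableEq Ω'] [DecidableEq α]
  [DecidableEq β] [DecidableEq γ]

lemma IsPMF.nonempty {p : Ω → ℝ} (hp : IsPMF p) : Nonempty Ω := by
  by_contra h
  rw [not_nonempty_iff] at h
  simpa using hp.2

lemma IsPMF.apply_le_one {p : Ω → ℝ} (hp : IsPMF p) (ω : Ω) : p ω ≤ 1 :=
  hp.2 ▸ Finset.single_le_sum (fun ω _ => hp.1 ω) (Finset.mem_univ ω)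

lemma isPMF_single [DecidableEq Ω] (ω : Ω) : IsPMF (Pi.single ω 1 : Ω → ℝ) :=
  ⟨fun ω' => by rw [Pi.single_apply]; split_ifs <;> norm_num, by simp⟩

lemma IsPMF.eq_of_apply_eq_one {p : Ω → ℝ} (hp : IsPMF p) {ω ω' : Ω} (h : p ω = 1)
    (h' : p ω' = 1) : ω = ω' := by
  classical
  by_contra hne
  have := Finset.sum_le_univ_sum_of_nonneg (s := {ω, ω'}) hp.1
  rw [Finset.sum_pair hne, hp.2, h, h'] at this
  norm_num at this

lemma sum_distOf_mul [Fintype β] (p : Ω → ℝ) (A : Ω → β) (h : β → ℝ) :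
    ∑ b, distOf p A b * h b = ∑ ω, p ω * h (A ω) := by
  simp only [distOf, Finset.sum_mul, ite_mul, zero_mul]
  rw [Finset.sum_comm]
  simp

lemma sum_distOf [Fintype β] (p : Ω → ℝ) (A : Ω → β) : ∑ b, distOf p A b = ∑ ω, p ω := by
  simpa using sum_distOf_mul p A fun _ => 1

lemma distOf_nonneg {p : Ω → ℝ} (hp : ∀ ω, 0 ≤ p ω) (A : Ω → α) (a : α) : 0 ≤ distOf p A a :=
  Finset.sum_nonneg fun ω _ => by split_ifs <;> simp [hp]

lemma IsPMF.distOf [Fintype β] {p : Ω → ℝ} (hp : IsPMF p) (A : Ω → β) : IsPMF (distOf p A) :=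
  ⟨distOf_nonneg hp.1 A, by rw [sum_distOf, hp.2]⟩

lemma distOf_apply_ne_zero {p : Ω → ℝ} (hp : ∀ ω, 0 ≤ p ω) (A : Ω → α) {ω : Ω} (h : p ω ≠ 0) :
    distOf p A (A ω) ≠ 0 :=
  (Finset.sum_pos' (fun ω' _ => by split_ifs <;> simp [hp])
    ⟨ω, Finset.mem_univ _, by simpa using (hp ω).lt_of_ne' h⟩).ne'

lemma exists_of_distOf_ne_zero {p : Ω → ℝ} {A : Ω → α} {a : α} (h : distOf p A a ≠ 0) :
    ∃ ω, p ω ≠ 0 ∧ A ω = a := by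
  obtain ⟨ω, -, hω⟩ := Finset.exists_ne_zero_of_sum_ne_zero h
  rw [Ne, ite_eq_right_iff, Classical.not_imp] at hω
  exact ⟨ω, hω.2, hω.1⟩

lemma distOf_distOf (p : Ω → ℝ) (T : Ω → Ω') (A : Ω' → α) :
    distOf (distOf p T) A = distOf p fun ω => A (T ω) := by
  funext a
  simpa [distOf] using sum_distOf_mul p T fun t => if A t = a then 1 else 0

lemma distOf_apply_of_injective (p : Ω → ℝ) {A : Ω → α} (hA : A.Injective) (ω : Ω) :
    distOf p A (A ω) = p ω := by
  classical
  simp [distOf, hA.eq_iff]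

lemma distOf_equiv (p : Ω → ℝ) (e : Ω ≃ α) : distOf p e = fun a => p (e.symm a) := by
  funext a
  simpa using distOf_apply_of_injective p e.injective (e.symm a)

lemma sum_distOf_prodMk [Fintype β] (p : Ω → ℝ) (A : Ω → β) (C : Ω → γ) (c : γ) :
    ∑ b, distOf p (fun ω => (A ω, C ω)) (b, c) = distOf p C c := by
  simp only [distOf, Prod.mk.injEq, ite_and]
  rw [Finset.sum_comm]
  simp

lemma probOf_eq_sum_mul (p : Ω → ℝ) (E : Ω → Prop) [DecidablePred E] :
    probOf p E = ∑ ω, p ω * if E ω then 1 else 0 := by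
  simp only [probOf, mul_ite, mul_one, mul_zero]
  exact Finset.sum_congr rfl fun ω _ => by congr

lemma probOf_distOf (p : Ω → ℝ) (T : Ω → Ω') (E : Ω' → Prop) :
    probOf (distOf p T) E = probOf p fun ω => E (T ω) := by
  classical
  rw [probOf_eq_sum_mul, probOf_eq_sum_mul, sum_distOf_mul]

lemma probOf_mono {p : Ω → ℝ} (hp : ∀ ω, 0 ≤ p ω) {E E' : Ω → Prop} (h : ∀ ω, E ω → E' ω) :
    probOf p E ≤ probOf p E' := by
  classical
  rw [probOf_eq_sum_mul, probOf_eq_sum_mul]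
  refine Finset.sum_le_sum fun ω _ => mul_le_mul_of_nonneg_left ?_ (hp ω)
  by_cases hE : E ω
  · simp [hE, h ω hE]
  · rw [if_neg hE]
    split_ifs <;> norm_num

lemma probOf_nonneg {p : Ω → ℝ} (hp : ∀ ω, 0 ≤ p ω) (E : Ω → Prop) : 0 ≤ probOf p E :=
  Finset.sum_nonneg fun ω _ => by split_ifs <;> simp [hp]

lemma probOf_eq_zero_iff {p : Ω → ℝ} (hp : ∀ ω, 0 ≤ p ω) (E : Ω → Prop) :
    probOf p E = 0 ↔ ∀ ω, p ω ≠ 0 → ¬ E ω := by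
  rw [probOf, Finset.sum_eq_zero_iff_of_nonneg fun ω _ => by split_ifs <;> simp [hp]]
  simp only [Finset.mem_univ, true_imp_iff, ite_eq_right_iff]
  exact forall_congr' fun ω => not_imp_not.symm.trans (by rfl)

lemma IsPMF.le_probOf {p : Ω → ℝ} (hp : IsPMF p) {E : Ω → Prop} {ω : Ω} (h : E ω) :
    p ω ≤ probOf p E := by
  classical
  rw [probOf_eq_sum_mul]
  refine le_trans ?_ (Finset.single_le_sum (fun ω' _ => ?_) (Finset.mem_univ ω))
  · simp [h]
  · split_ifs <;> simp [hp.1]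

lemma IsPMF.sum_mul_ite {p : Ω → ℝ} (hp : IsPMF p) (E : Ω → Prop) [DecidablePred E] (x y : ℝ) :
    ∑ ω, p ω * (if E ω then x else y) = probOf p E * x + (1 - probOf p E) * y := by
  rw [← hp.2, probOf_eq_sum_mul, ← Finset.sum_sub_distrib, Finset.sum_mul, Finset.sum_mul,
    ← Finset.sum_add_distrib]
  refine Finset.sum_congr rfl fun ω _ => ?_
  split_ifs <;> ring

lemma IsPMF.probOf_not {p : Ω → ℝ} (hp : IsPMF p) (E : Ω → Prop) :
    probOf p (fun ω => ¬ E ω) = 1 - probOf p E := by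
  classical
  simpa [probOf_eq_sum_mul p fun ω => ¬ E ω, ite_not] using hp.sum_mul_ite E 0 1

/-- The joint law `p(ω) κ(v|ω)` of an outcome `ω` of law `p` and the output `v` of the kernel `κ`
fed with `ω`. -/
def compProd (p : Ω → ℝ) (κ : Ω → Φ → ℝ) : Ω × Φ → ℝ :=
  fun ω => p ω.1 * κ ω.1 ω.2

lemma IsPMF.compProd [Fintype Φ] {p : Ω → ℝ} (hp : IsPMF p) {κ : Ω → Φ → ℝ}
    (hκ : ∀ ω, IsPMF (κ ω)) : IsPMF (compProd p κ) := by
  refine ⟨fun ω => mul_nonneg (hp.1 _) ((hκ _).1 _), ?_⟩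
  simp only [_root_.compProd, Fintype.sum_prod_type, ← Finset.mul_sum, (hκ _).2, mul_one, hp.2]

lemma distOf_compProd_fst [Fintype Φ] (p : Ω' → ℝ) {κ : Ω' → Φ → ℝ} (hκ : ∀ ω, IsPMF (κ ω)) :
    distOf (compProd p κ) Prod.fst = p := by
  funext ω
  simp [distOf, compProd, Fintype.sum_prod_type, ← Finset.mul_sum, (hκ _).2]

lemma distOf_compProd_comp_fst [Fintype Φ] (p : Ω → ℝ) {κ : Ω → Φ → ℝ}
    (hκ : ∀ ω, IsPMF (κ ω)) (A : Ω → α) : distOf (compProd p κ) (fun ω => A ω.1) = distOf p A := by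
  classical
  rw [← distOf_distOf _ Prod.fst A, distOf_compProd_fst p hκ]

lemma distOf_compProd_snd [Fintype Φ] (p : Ω' → ℝ) (κ : Ω' → Φ → ℝ) (T : Ω' → Φ → β) :
    distOf (compProd p κ) (fun ω => (ω.1, T ω.1 ω.2)) = compProd p fun ω => distOf (κ ω) (T ω) := by
  funext ⟨ω, b⟩
  simp only [distOf, compProd, Fintype.sum_prod_type, Prod.mk.injEq, Finset.mul_sum, mul_ite,
    mul_zero]
  rw [Fintype.sum_eq_single ω fun ω' hne => by simp [hne]]
  simp

lemma compProd_single [DecidableEq Φ] (p : Ω' → ℝ) (d : Ω' → Φ) :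
    compProd p (fun ω => Pi.single (d ω) 1) = distOf p fun ω => (ω, d ω) := by
  funext ⟨ω, v⟩
  rw [distOf, Fintype.sum_eq_single ω fun ω' hne => by simp [hne]]
  simp [compProd, Pi.single_apply, eq_comm]

end FinitePMF

/-- A randomized estimator is a mixture of deterministic ones, so one of them is at least as good:
in each state `c` guess the value that minimizes the error. -/
lemma exists_deterministic_estimator {Ω β γ : Type*} [Fintype Ω] [Fintype β] [Finite γ]
    (p : Ω → ℝ) (A : Ω → β) (C : Ω → γ)
    {κ : γ → β → ℝ} (hκ : ∀ c, IsPMF (κ c)) :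
    ∃ d : γ → β, probOf p (fun ω => d (C ω) ≠ A ω) ≤
      probOf (compProd p fun ω => κ (C ω)) fun ω => ω.2 ≠ A ω.1 := by
  classical
  cases nonempty_fintype γ
  let err (c : γ) (b : β) : ℝ :=
    ∑ ω, if C ω = c then p ω * (if b ≠ A ω then 1 else 0) else 0
  have hmin : ∀ c, ∃ b, ∀ b', err c b ≤ err c b' := fun c => by
    have := (hκ c).nonempty
    exact Finite.exists_min (err c)
  choose d hd using hmin
  refine ⟨d, ?_⟩
  calc probOf p (fun ω => d (C ω) ≠ A ω)
      = ∑ c, err c (d c) := by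
        rw [probOf_eq_sum_mul, Finset.sum_comm]
        simp
    _ = ∑ c, ∑ b, κ c b * err c (d c) := by simp only [← Finset.sum_mul, (hκ _).2, one_mul]
    _ ≤ ∑ c, ∑ b, κ c b * err c b :=
        Finset.sum_le_sum fun c _ => Finset.sum_le_sum fun b _ =>
          mul_le_mul_of_nonneg_left (hd c b) ((hκ c).1 b)
    _ = ∑ c, ∑ ω, if C ω = c then ∑ b, p ω * κ c b * (if b ≠ A ω then 1 else 0) else 0 := by
        refine Finset.sum_congr rfl fun c _ => ?_
        simp only [err, Finset.mul_sum]
        rw [Finset.sum_comm]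
        refine Finset.sum_congr rfl fun ω _ => ?_
        split_ifs
        · exact Finset.sum_congr rfl fun b _ => by ring
        · simp
    _ = probOf (compProd p fun ω => κ (C ω)) (fun ω => ω.2 ≠ A ω.1) := by
        rw [probOf_eq_sum_mul, Fintype.sum_prod_type, Finset.sum_comm]
        simp [compProd]

section PiLaw

variable {ι σ : Type*} [Fintype ι] [DecidableEq ι]

/-- The law of independent coordinates, the `i`-th of them distributed according to `q i`. -/
def piLaw {ι σ : Type*} [Fintype ι] (q : ι → σ → ℝ) : (ι → σ) → ℝ :=
  fun w => ∏ i, q i (w i)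

lemma piLaw_update_mul (q : ι → σ → ℝ) (w : ι → σ) (i : ι) (s : σ) :
    piLaw q (Function.update w i s) * q i (w i) = piLaw q w * q i s := by
  have hrest : ∏ j ∈ Finset.univ.erase i, q j (Function.update w i s j) =
      ∏ j ∈ Finset.univ.erase i, q j (w j) :=
    Finset.prod_congr rfl fun j hj => by rw [Function.update_of_ne (Finset.ne_of_mem_erase hj)]
  rw [piLaw, piLaw, ← Finset.mul_prod_erase Finset.univ _ (Finset.mem_univ i),
    ← Finset.mul_prod_erase Finset.univ (fun j => q j (w j)) (Finset.mem_univ i), hrest,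
    Function.update_self]
  ring

variable [Fintype σ] {q : ι → σ → ℝ}

lemma IsPMF.pi (hq : ∀ i, IsPMF (q i)) : IsPMF (piLaw q) :=
  ⟨fun w => Finset.prod_nonneg fun i _ => (hq i).1 (w i), by
    simp only [piLaw, ← Fintype.prod_sum, (hq _).2, Finset.prod_const_one]⟩

/-- Exchanging the `i`-th coordinate of `w` with an independent copy `s` of it is an involution
that preserves the law of `(w, s)`. -/
lemma sum_piLaw_mul (hq : ∀ i, IsPMF (q i)) (i : ι) (φ : (ι → σ) → ℝ) :
    ∑ w, piLaw q w * φ w = ∑ w, ∑ s, piLaw q w * q i s * φ (Function.update w i s) := by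
  let swap : Equiv.Perm ((ι → σ) × σ) :=
    Function.Involutive.toPerm (fun z => (Function.update z.1 i z.2, z.1 i)) fun z => by simp
  calc ∑ w, piLaw q w * φ w
      = ∑ z : (ι → σ) × σ, piLaw q z.1 * q i z.2 * φ z.1 := by
        simp only [Fintype.sum_prod_type, ← Finset.sum_mul, ← Finset.mul_sum, (hq i).2, mul_one]
    _ = ∑ z : (ι → σ) × σ, piLaw q (swap z).1 * q i (swap z).2 * φ (swap z).1 :=
        (Equiv.sum_comp swap _).symm
    _ = ∑ w, ∑ s, piLaw q w * q i s * φ (Function.update w i s) := by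
        rw [Fintype.sum_prod_type]
        refine Finset.sum_congr rfl fun w _ => Finset.sum_congr rfl fun s _ => ?_
        exact congrArg (· * _) (piLaw_update_mul q w i s)

lemma sum_piLaw_mul_apply (hq : ∀ i, IsPMF (q i)) (i : ι) (h : σ → ℝ) :
    ∑ w, piLaw q w * h (w i) = ∑ s, q i s * h s := by
  rw [sum_piLaw_mul hq i]
  simp only [Function.update_self, mul_assoc, ← Finset.mul_sum, ← Finset.sum_mul, (IsPMF.pi hq).2,
    one_mul]

lemma distOf_piLaw {α : Type*} [DecidableEq α] (q : ι → σ → ℝ) (A : ι → σ → α) :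
    distOf (piLaw q) (fun w i => A i (w i)) = piLaw fun i => distOf (q i) (A i) := by
  funext a
  simp only [piLaw, distOf, Fintype.prod_sum, Finset.prod_ite_zero, Finset.mem_univ, true_imp_iff,
    funext_iff]

lemma distOf_compProd_apply [DecidableEq σ] {Φ : Type*} [Fintype Φ] [DecidableEq Φ]
    (hq : ∀ i, IsPMF (q i)) (κ : (ι → σ) → Φ → ℝ) (i : ι) :
    distOf (compProd (piLaw q) κ) (fun ω => (ω.1 i, ω.2)) = compProd (q i) fun s =>
      distOf (compProd (piLaw q) fun w => κ (Function.update w i s)) Prod.snd := by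
  funext ⟨s, v⟩
  calc distOf (compProd (piLaw q) κ) (fun ω => (ω.1 i, ω.2)) (s, v)
      = ∑ w, piLaw q w * (if w i = s then κ w v else 0) := by
        simp [distOf, compProd, Fintype.sum_prod_type, ite_and]
    _ = q i s * ∑ w, piLaw q w * κ (Function.update w i s) v := by
        rw [sum_piLaw_mul hq i, Finset.mul_sum]
        refine Finset.sum_congr rfl fun w _ => ?_
        simp only [Function.update_self, mul_ite, mul_zero, Finset.sum_ite_eq', Finset.mem_univ,
          if_true]
        ring
    _ = _ := by simp [distOf, compProd, Fintype.sum_prod_type]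

end PiLaw

section CondDist

variable {Ω α γ : Type*} [Fintype Ω] [Fintype α] [DecidableEq α] [DecidableEq γ] {p : Ω → ℝ}

/-- The kernel `κ` is a version of the conditional law of `A` given `C`; on null values of `C` it
may be any law. -/
def IsCondDist (p : Ω → ℝ) (A : Ω → α) (C : Ω → γ) (κ : γ → α → ℝ) : Prop :=
  (∀ c, IsPMF (κ c)) ∧ ∀ a c, distOf p (fun ω => (A ω, C ω)) (a, c) = distOf p C c * κ c a

lemma exists_isCondDist (hp : IsPMF p) (A : Ω → α) (C : Ω → γ) : ∃ κ, IsCondDist p A C κ := by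
  obtain ⟨ω₀⟩ := hp.nonempty
  have hsum := sum_distOf_prodMk p A C
  have hnn := distOf_nonneg hp.1 fun ω => (A ω, C ω)
  refine ⟨fun c a => if distOf p C c = 0 then (Pi.single (A ω₀) 1 : α → ℝ) a
    else distOf p (fun ω => (A ω, C ω)) (a, c) / distOf p C c, fun c => ?_, fun a c => ?_⟩
  · by_cases hc : distOf p C c = 0
    · simpa only [hc, if_true] using isPMF_single (A ω₀)
    · simp only [hc, if_false]
      exact ⟨fun a => div_nonneg (hnn _) (distOf_nonneg hp.1 C c),
        by rw [← Finset.sum_div, hsum, div_self hc]⟩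
  · by_cases hc : distOf p C c = 0
    · rw [hc, zero_mul]
      exact (Finset.sum_eq_zero_iff_of_nonneg fun a _ => hnn (a, c)).1 ((hsum c).trans hc) a
        (Finset.mem_univ a)
    · simp only [hc, if_false]
      rw [mul_div_cancel₀ _ hc]

lemma isCondDist_compProd (p : Ω → ℝ) (C : Ω → γ)
    {κ : γ → α → ℝ} (hκ : ∀ c, IsPMF (κ c)) :
    IsCondDist (compProd p fun ω => κ (C ω)) Prod.snd (fun ω => C ω.1) κ := by
  refine ⟨hκ, fun v c => ?_⟩
  rw [distOf_compProd_comp_fst p (fun ω => hκ _) C]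
  simp only [distOf, compProd, Fintype.sum_prod_type, Prod.mk.injEq, Finset.sum_mul]
  refine Finset.sum_congr rfl fun ω _ => ?_
  by_cases h : C ω = c <;> simp [h]

lemma IsCondDist.apply_ne_zero (hp : ∀ ω, 0 ≤ p ω) {A : Ω → α} {C : Ω → γ} {κ : γ → α → ℝ}
    (h : IsCondDist p A C κ) {ω : Ω} (hω : p ω ≠ 0) : κ (C ω) (A ω) ≠ 0 :=
  right_ne_zero_of_mul (h.2 _ _ ▸ distOf_apply_ne_zero hp (fun ω => (A ω, C ω)) hω)

end CondDist

/-- `A` and `A'` are almost surely functions of each other, so that they carry the same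
information. -/
def InfoEquiv {Ω α α' : Type*} (p : Ω → ℝ) (A : Ω → α) (A' : Ω → α') : Prop :=
  ∀ ω ω', p ω ≠ 0 → p ω' ≠ 0 → (A ω = A ω' ↔ A' ω = A' ω')

lemma InfoEquiv.refl {Ω α : Type*} (p : Ω → ℝ) (A : Ω → α) : InfoEquiv p A A :=
  fun _ _ _ _ => Iff.rfl

lemma InfoEquiv.prodMk {Ω α α' γ γ' : Type*} {p : Ω → ℝ} {A : Ω → α} {A' : Ω → α'} {C : Ω → γ}
    {C' : Ω → γ'} (hA : InfoEquiv p A A') (hC : InfoEquiv p C C') :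
    InfoEquiv p (fun ω => (A ω, C ω)) fun ω => (A' ω, C' ω) :=
  fun _ _ h₁ h₂ => by simp only [Prod.mk.injEq, hA _ _ h₁ h₂, hC _ _ h₁ h₂]

/-- The kernel used for Fano's inequality: mass `1 - e` on the guess `d c`, and the mass `e` spread
uniformly. -/
noncomputable def guessKernel {α γ : Type*} [Fintype α] [DecidableEq α] (d : γ → α) (e : ℝ) :
    γ → α → ℝ :=
  fun c a => (if a = d c then 1 - e else 0) + e / Fintype.card α

lemma isPMF_guessKernel {α γ : Type*} [Fintype α] [DecidableEq α] (d : γ → α) {e : ℝ}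
    (h0 : 0 ≤ e) (h1 : e ≤ 1) (c : γ) : IsPMF (guessKernel d e c) := by
  have : Nonempty α := ⟨d c⟩
  refine ⟨fun a => add_nonneg ?_ (by positivity), ?_⟩
  · split_ifs <;> simp [h1]
  · simp [guessKernel, Finset.sum_add_distrib, mul_div_cancel₀]

section Entropy

variable {Ω Ω' α β γ δ : Type*} [Fintype Ω] [Fintype Ω'] [DecidableEq Ω'] [Fintype α]
  [DecidableEq α] [Fintype β] [DecidableEq β] [Fintype γ] [DecidableEq γ] [Fintype δ]
  [DecidableEq δ] {p : Ω → ℝ}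

lemma entRV_eq (p : Ω → ℝ) (A : Ω → α) :
    entRV p A = -∑ ω, p ω * Real.log (distOf p A (A ω)) := by
  rw [entRV, entD, sum_distOf_mul]

lemma entRV_distOf (p : Ω → ℝ) (T : Ω → Ω') (A : Ω' → α) :
    entRV (distOf p T) A = entRV p fun ω => A (T ω) := by
  rw [entRV, distOf_distOf, entRV]

lemma condEnt_distOf (p : Ω → ℝ) (T : Ω → Ω') (A : Ω' → α) (C : Ω' → γ) :
    condEnt (distOf p T) A C = condEnt p (fun ω => A (T ω)) fun ω => C (T ω) := by
  simp only [condEnt, entRV_distOf]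

lemma condMutInfo_distOf (p : Ω → ℝ) (T : Ω → Ω') (A : Ω' → α) (B : Ω' → β) (C : Ω' → γ) :
    condMutInfo (distOf p T) A B C =
      condMutInfo p (fun ω => A (T ω)) (fun ω => B (T ω)) fun ω => C (T ω) := by
  simp only [condMutInfo, entRV_distOf]

lemma InfoEquiv.entRV_eq {A : Ω → α} {A' : Ω → β} (h : InfoEquiv p A A') :
    entRV p A = entRV p A' := by
  rw [_root_.entRV_eq, _root_.entRV_eq, neg_inj]
  refine Finset.sum_congr rfl fun ω _ => ?_
  rcases eq_or_ne (p ω) 0 with hω | hω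
  · simp [hω]
  · congr 2
    refine Finset.sum_congr rfl fun ω' _ => ?_
    rcases eq_or_ne (p ω') 0 with hω' | hω'
    · simp [hω']
    · simp only [h ω' ω hω' hω]

lemma entRV_comp_le (hp : ∀ ω, 0 ≤ p ω) (A : Ω → α) (h : α → β) :
    entRV p (fun ω => h (A ω)) ≤ entRV p A := by
  rw [entRV_eq, entRV_eq, neg_le_neg_iff]
  refine Finset.sum_le_sum fun ω _ => ?_
  rcases eq_or_ne (p ω) 0 with hω | hω
  · simp [hω]
  have hpos : 0 < distOf p A (A ω) :=
    (distOf_nonneg hp A _).lt_of_ne' (distOf_apply_ne_zero hp A hω)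
  refine mul_le_mul_of_nonneg_left (Real.log_le_log hpos ?_) (hp ω)
  refine Finset.sum_le_sum fun ω' _ => ?_
  by_cases hA : A ω' = A ω
  · simp [hA]
  · rw [if_neg hA]
    split_ifs
    exacts [hp ω', le_rfl]

lemma condEnt_congr {A : Ω → α} {A' : Ω → β} {C : Ω → γ} {C' : Ω → δ} (hA : InfoEquiv p A A')
    (hC : InfoEquiv p C C') : condEnt p A C = condEnt p A' C' := by
  rw [condEnt, condEnt, (hA.prodMk hC).entRV_eq, hC.entRV_eq]

lemma condMutInfo_congr {α' β' : Type*} [Fintype α'] [DecidableEq α'] [Fintype β'] [DecidableEq β']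
    {A : Ω → α} {A' : Ω → α'} {B : Ω → β} {B' : Ω → β'} {C : Ω → γ} {C' : Ω → δ}
    (hA : InfoEquiv p A A') (hB : InfoEquiv p B B') (hC : InfoEquiv p C C') :
    condMutInfo p A B C = condMutInfo p A' B' C' := by
  simp only [condMutInfo, (hA.prodMk hC).entRV_eq, (hB.prodMk hC).entRV_eq,
    (hA.prodMk (hB.prodMk hC)).entRV_eq, hC.entRV_eq]

/-- The conditional cross entropy of `A` given `C` relative to the kernel `κ`: the mean number of
nats spent describing `A` with a code designed for the law `κ (C)`. -/
noncomputable def condCrossEnt (p : Ω → ℝ) (A : Ω → α) (C : Ω → γ) (κ : γ → α → ℝ) : ℝ :=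
  -∑ ω, p ω * Real.log (κ (C ω) (A ω))

lemma condCrossEnt_sub_condEnt (hp : ∀ ω, 0 ≤ p ω) {A : Ω → α} {C : Ω → γ} {κ : γ → α → ℝ}
    (hκ : ∀ c, IsPMF (κ c)) (h0 : ∀ ω, p ω ≠ 0 → κ (C ω) (A ω) ≠ 0) :
    condCrossEnt p A C κ - condEnt p A C = ∑ t : α × γ, distOf p C t.2 * κ t.2 t.1 *
      InformationTheory.klFun
        (distOf p (fun ω => (A ω, C ω)) t / (distOf p C t.2 * κ t.2 t.1)) := by
  set P := distOf p fun ω => (A ω, C ω)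
  set Q : α × γ → ℝ := fun t => distOf p C t.2 * κ t.2 t.1
  have hPQ : ∑ t, P t = ∑ t, Q t := by
    rw [sum_distOf, Fintype.sum_prod_type_right]
    simp only [Q, ← Finset.mul_sum, (hκ _).2, mul_one, sum_distOf]
  have hQP : ∀ t, Q t = 0 → P t = 0 := fun t hQ => by
    by_contra hP
    obtain ⟨ω, hω, rfl⟩ := exists_of_distOf_ne_zero hP
    exact mul_ne_zero (distOf_apply_ne_zero hp C hω) (h0 ω hω) hQ
  have hterm : ∀ t, Q t * InformationTheory.klFun (P t / Q t) =
      P t * (Real.log (P t) - Real.log (Q t)) + (Q t - P t) := fun t => by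
    rcases eq_or_ne (Q t) 0 with hQ | hQ
    · simp [hQ, hQP t hQ]
    rcases eq_or_ne (P t) 0 with hP | hP
    · simp [hP, InformationTheory.klFun]
    rw [InformationTheory.klFun, Real.log_div hP hQ]
    field_simp
    ring
  calc condCrossEnt p A C κ - condEnt p A C
      = ∑ ω, p ω * (Real.log (P (A ω, C ω)) - Real.log (Q (A ω, C ω))) := by
        rw [condCrossEnt, condEnt, entRV_eq, entRV_eq, ← sub_eq_zero]
        simp only [← Finset.sum_neg_distrib, ← Finset.sum_sub_distrib]
        refine Finset.sum_eq_zero fun ω _ => ?_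
        rcases eq_or_ne (p ω) 0 with hω | hω
        · simp [hω]
        · rw [Real.log_mul (distOf_apply_ne_zero hp C hω) (h0 ω hω)]
          ring
    _ = ∑ t, P t * (Real.log (P t) - Real.log (Q t)) :=
        (sum_distOf_mul p _ fun t => Real.log (P t) - Real.log (Q t)).symm
    _ = ∑ t, Q t * InformationTheory.klFun (P t / Q t) := by
        simp only [hterm, Finset.sum_add_distrib, Finset.sum_sub_distrib, hPQ, sub_self, add_zero]

lemma condEnt_le_condCrossEnt (hp : ∀ ω, 0 ≤ p ω) {A : Ω → α} {C : Ω → γ} {κ : γ → α → ℝ}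
    (hκ : ∀ c, IsPMF (κ c)) (h0 : ∀ ω, p ω ≠ 0 → κ (C ω) (A ω) ≠ 0) :
    condEnt p A C ≤ condCrossEnt p A C κ := by
  rw [← sub_nonneg, condCrossEnt_sub_condEnt hp hκ h0]
  have hQ : ∀ t : α × γ, 0 ≤ distOf p C t.2 * κ t.2 t.1 := fun t =>
    mul_nonneg (distOf_nonneg hp C _) ((hκ _).1 _)
  exact Finset.sum_nonneg fun t _ => mul_nonneg (hQ t) <|
    InformationTheory.klFun_nonneg (div_nonneg (distOf_nonneg hp _ _) (hQ t))

lemma condEnt_eq_condCrossEnt_iff (hp : ∀ ω, 0 ≤ p ω) {A : Ω → α} {C : Ω → γ} {κ : γ → α → ℝ}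
    (hκ : ∀ c, IsPMF (κ c)) (h0 : ∀ ω, p ω ≠ 0 → κ (C ω) (A ω) ≠ 0) :
    condEnt p A C = condCrossEnt p A C κ ↔ IsCondDist p A C κ := by
  have hQ : ∀ t : α × γ, 0 ≤ distOf p C t.2 * κ t.2 t.1 := fun t =>
    mul_nonneg (distOf_nonneg hp C _) ((hκ _).1 _)
  have hdiv : ∀ t : α × γ,
      0 ≤ distOf p (fun ω => (A ω, C ω)) t / (distOf p C t.2 * κ t.2 t.1) := fun t =>
    div_nonneg (distOf_nonneg hp _ _) (hQ t)
  rw [eq_comm, ← sub_eq_zero, condCrossEnt_sub_condEnt hp hκ h0,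
    Finset.sum_eq_zero_iff_of_nonneg fun t _ =>
      mul_nonneg (hQ t) (InformationTheory.klFun_nonneg (hdiv t))]
  simp only [Finset.mem_univ, true_imp_iff, mul_eq_zero (a := _ * _),
    InformationTheory.klFun_eq_zero_iff (hdiv _)]
  refine ⟨fun h => ⟨hκ, fun a c => ?_⟩, fun h t => ?_⟩
  · rcases h (a, c) with h | h
    · by_contra hne
      obtain ⟨ω, hω, hac⟩ := exists_of_distOf_ne_zero (h ▸ hne)
      obtain ⟨rfl, rfl⟩ := Prod.mk.inj hac
      exact mul_ne_zero (distOf_apply_ne_zero hp C hω) (h0 ω hω) h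
    · exact eq_of_div_eq_one h
  · exact or_iff_not_imp_left.2 fun hne => by rw [h.2, div_self hne]

lemma IsCondDist.condEnt_eq (hp : ∀ ω, 0 ≤ p ω) {A : Ω → α} {C : Ω → γ} {κ : γ → α → ℝ}
    (h : IsCondDist p A C κ) : condEnt p A C = condCrossEnt p A C κ :=
  (condEnt_eq_condCrossEnt_iff hp h.1 fun _ hω => h.apply_ne_zero hp hω).2 h

lemma condEnt_le_condEnt_comp (hp : IsPMF p) (A : Ω → α) (C : Ω → γ) (h : γ → δ) :
    condEnt p A C ≤ condEnt p A fun ω => h (C ω) := by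
  obtain ⟨κ, hκ⟩ := exists_isCondDist hp A fun ω => h (C ω)
  calc condEnt p A C
      ≤ condCrossEnt p A C fun c => κ (h c) :=
        condEnt_le_condCrossEnt hp.1 (fun c => hκ.1 (h c)) fun _ hω => hκ.apply_ne_zero hp.1 hω
    _ = condEnt p A fun ω => h (C ω) := (hκ.condEnt_eq hp.1).symm

lemma condEnt_le_condEnt_add (hp : IsPMF p) (A : Ω → α) (B : Ω → β) (C : Ω → γ) (h : γ → δ) :
    condEnt p A C ≤ condEnt p B C + condEnt p A fun ω => (B ω, h (C ω)) := by
  have hdrop := entRV_comp_le hp.1 (fun ω => (A ω, B ω, C ω)) fun t => (t.1, t.2.2)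
  have hcond := condEnt_le_condEnt_comp hp A (fun ω => (B ω, C ω)) (Prod.map id h)
  simp only [condEnt, Prod.map_apply, id] at hcond ⊢
  linarith

lemma condMutInfo_eq (p : Ω → ℝ) (A : Ω → α) (B : Ω → β) (C : Ω → γ) :
    condMutInfo p A B C = condEnt p A C - condEnt p A fun ω => (B ω, C ω) := by
  simp only [condMutInfo, condEnt]
  ring

lemma condMutInfo_comm (p : Ω → ℝ) (A : Ω → α) (B : Ω → β) (C : Ω → γ) :
    condMutInfo p A B C = condMutInfo p B A C := by
  have h : InfoEquiv p (fun ω => (A ω, B ω, C ω)) fun ω => (B ω, A ω, C ω) :=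
    fun ω ω' _ _ => by simp only [Prod.mk.injEq, and_left_comm]
  rw [condMutInfo, condMutInfo, h.entRV_eq]
  ring

lemma condMutInfo_nonneg (hp : IsPMF p) (A : Ω → α) (B : Ω → β) (C : Ω → γ) :
    0 ≤ condMutInfo p A B C := by
  rw [condMutInfo_eq, sub_nonneg]
  exact condEnt_le_condEnt_comp hp A (fun ω => (B ω, C ω)) Prod.snd

lemma IsCondDist.condMutInfo_eq_zero_iff (hp : ∀ ω, 0 ≤ p ω) {A : Ω → α} {C : Ω → γ}
    {κ : γ → α → ℝ} (hκ : IsCondDist p A C κ) (B : Ω → β) :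
    condMutInfo p A B C = 0 ↔ IsCondDist p A (fun ω => (B ω, C ω)) fun c => κ c.2 := by
  rw [condMutInfo_eq, sub_eq_zero, hκ.condEnt_eq hp, eq_comm]
  exact condEnt_eq_condCrossEnt_iff hp (fun c : β × γ => hκ.1 c.2) fun _ hω =>
    hκ.apply_ne_zero hp hω

lemma condMutInfo_compProd_eq_zero (hp : IsPMF p) (X : Ω → γ) (Y : Ω → β) {κ : γ → α → ℝ}
    (hκ : ∀ x, IsPMF (κ x)) :
    condMutInfo (compProd p fun ω => κ (X ω)) Prod.snd (fun ω => Y ω.1) (fun ω => X ω.1) = 0 :=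
  ((isCondDist_compProd p X hκ).condMutInfo_eq_zero_iff (hp.compProd fun ω => hκ (X ω)).1 _).2 <|
    isCondDist_compProd p (fun ω => (Y ω, X ω)) (κ := fun c : β × γ => κ c.2)
      fun c => hκ c.2

lemma condEnt_eq_zero_iff (hp : IsPMF p) (A : Ω → α) (C : Ω → γ) :
    condEnt p A C = 0 ↔ ∃ d : γ → α, ∀ ω, p ω ≠ 0 → A ω = d (C ω) := by
  constructor
  · intro h
    obtain ⟨κ, hκ⟩ := exists_isCondDist hp A C
    have hlog : ∀ ω, p ω * Real.log (κ (C ω) (A ω)) ≤ 0 := fun ω =>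
      mul_nonpos_of_nonneg_of_nonpos (hp.1 ω)
        (Real.log_nonpos ((hκ.1 _).1 _) ((hκ.1 _).apply_le_one _))
    have hsum : ∑ ω, p ω * Real.log (κ (C ω) (A ω)) = 0 := by
      rw [← neg_eq_zero, ← h, hκ.condEnt_eq hp.1, condCrossEnt]
    have hone : ∀ ω, p ω ≠ 0 → κ (C ω) (A ω) = 1 := fun ω hω => by
      have := (Finset.sum_eq_zero_iff_of_nonpos fun ω _ => hlog ω).1 hsum ω (Finset.mem_univ ω)
      refine Real.eq_one_of_pos_of_log_eq_zero ?_ ((mul_eq_zero.1 this).resolve_left hω)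
      exact ((hκ.1 _).1 _).lt_of_ne' (hκ.apply_ne_zero hp.1 hω)
    have hmode : ∀ c, ∃ a, ∀ a', κ c a' ≤ κ c a := fun c =>
      have := (hκ.1 c).nonempty
      Finite.exists_max (κ c)
    choose d hd using hmode
    refine ⟨d, fun ω hω => (hκ.1 (C ω)).eq_of_apply_eq_one (hone ω hω) ?_⟩
    exact ((hκ.1 _).apply_le_one _).antisymm (hone ω hω ▸ hd _ _)
  · rintro ⟨d, hd⟩
    have h : InfoEquiv p (fun ω => (A ω, C ω)) C := fun ω ω' hω hω' => by
      simp only [Prod.mk.injEq, hd ω hω, hd ω' hω', and_iff_right_iff_imp]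
      exact congrArg d
    rw [condEnt, h.entRV_eq, sub_self]

lemma condEnt_le_binEntropy_add (hp : IsPMF p) (A : Ω → α) (C : Ω → γ) (d : γ → α) :
    condEnt p A C ≤ Real.binEntropy (probOf p fun ω => A ω ≠ d (C ω)) +
      (probOf p fun ω => A ω ≠ d (C ω)) * Real.log (Fintype.card α) := by
  set e := probOf p fun ω => A ω ≠ d (C ω) with he
  obtain ⟨ω₀⟩ := hp.nonempty
  have hN : (0 : ℝ) < Fintype.card α := Nat.cast_pos.2 (Fintype.card_pos_iff.2 ⟨A ω₀⟩)
  have he0 : 0 ≤ e := probOf_nonneg hp.1 _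
  have he1 : probOf p (fun ω => A ω = d (C ω)) = 1 - e := by
    simpa using hp.probOf_not fun ω => A ω ≠ d (C ω)
  have hκ : ∀ c, IsPMF (guessKernel d e c) :=
    isPMF_guessKernel d he0 (sub_nonneg.1 (he1 ▸ probOf_nonneg hp.1 _))
  have hbound : ∀ ω, p ω ≠ 0 →
      0 < (if A ω ≠ d (C ω) then e / Fintype.card α else 1 - e) ∧
      (if A ω ≠ d (C ω) then e / Fintype.card α else 1 - e) ≤ guessKernel d e (C ω) (A ω) :=
    fun ω hω => by
      have hpos := (hp.1 ω).lt_of_ne' hω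
      by_cases h : A ω = d (C ω)
      · simp only [guessKernel, h, ne_eq, not_true_eq_false, if_false, if_true]
        exact ⟨hpos.trans_le (he1 ▸ hp.le_probOf h), le_add_of_nonneg_right (by positivity)⟩
      · simp only [guessKernel, h, ne_eq, not_false_eq_true, if_false, if_true, zero_add, le_refl,
          and_true]
        exact div_pos (hpos.trans_le (hp.le_probOf h)) hN
  calc condEnt p A C
      ≤ condCrossEnt p A C (guessKernel d e) := condEnt_le_condCrossEnt hp.1 hκ fun ω hω =>
        ((hbound ω hω).1.trans_le (hbound ω hω).2).ne'
    _ ≤ -∑ ω, p ω * (if A ω ≠ d (C ω) then Real.log (e / Fintype.card α)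
          else Real.log (1 - e)) := by
        refine neg_le_neg (Finset.sum_le_sum fun ω _ => ?_)
        rcases eq_or_ne (p ω) 0 with hω | hω
        · simp [hω]
        · rw [← apply_ite Real.log]
          exact mul_le_mul_of_nonneg_left (Real.log_le_log (hbound ω hω).1 (hbound ω hω).2) (hp.1 ω)
    _ = Real.binEntropy e + e * Real.log (Fintype.card α) := by
        rw [hp.sum_mul_ite, ← he, Real.binEntropy, Real.log_inv, Real.log_inv]
        rcases eq_or_ne e 0 with h0 | h0
        · simp [h0]
        · rw [Real.log_div h0 hN.ne']
          ring

lemma condEnt_pi_le {ι : Type*} [Fintype ι] [DecidableEq ι] (hp : IsPMF p) (A : Ω → ι → α)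
    (C : Ω → γ) (S : ι → γ → δ) :
    condEnt p A C ≤ ∑ i, condEnt p (fun ω => A ω i) fun ω => S i (C ω) := by
  choose κ hκ using fun i => exists_isCondDist hp (fun ω => A ω i) fun ω => S i (C ω)
  have hne : ∀ ω, p ω ≠ 0 → ∀ i, κ i (S i (C ω)) (A ω i) ≠ 0 := fun ω hω i =>
    (hκ i).apply_ne_zero hp.1 hω
  calc condEnt p A C
      ≤ condCrossEnt p A C fun c a => ∏ i, κ i (S i c) (a i) :=
        condEnt_le_condCrossEnt hp.1 (fun c => IsPMF.pi fun i => (hκ i).1 (S i c)) fun ω hω =>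
          Finset.prod_ne_zero_iff.2 fun i _ => hne ω hω i
    _ = ∑ i, condCrossEnt p (fun ω => A ω i) (fun ω => S i (C ω)) (κ i) := by
        simp only [condCrossEnt]
        rw [Finset.sum_neg_distrib, Finset.sum_comm, neg_inj]
        refine Finset.sum_congr rfl fun ω _ => ?_
        rw [← Finset.mul_sum]
        rcases eq_or_ne (p ω) 0 with hω | hω
        · simp [hω]
        · rw [Real.log_prod fun i _ => hne ω hω i]
    _ = ∑ i, condEnt p (fun ω => A ω i) fun ω => S i (C ω) :=
        Finset.sum_congr rfl fun i _ => ((hκ i).condEnt_eq hp.1).symm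

lemma entRV_piLaw {ι σ : Type*} [Fintype ι] [DecidableEq ι] [Fintype σ] {q : ι → σ → ℝ}
    (hq : ∀ i, IsPMF (q i)) (A : ι → σ → α) :
    entRV (piLaw q) (fun w i => A i (w i)) = ∑ i, entRV (q i) (A i) := by
  have hlog : ∀ w, piLaw q w * Real.log (distOf (piLaw q) (fun w i => A i (w i))
      fun i => A i (w i)) = ∑ i, piLaw q w * Real.log (distOf (q i) (A i) (A i (w i))) :=
    fun w => by
      rcases eq_or_ne (piLaw q w) 0 with hw | hw
      · simp [hw]
      · have hfactor : ∀ i, distOf (q i) (A i) (A i (w i)) ≠ 0 := fun i =>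
          distOf_apply_ne_zero (hq i).1 (A i) (Finset.prod_ne_zero_iff.1 hw i (Finset.mem_univ i))
        rw [distOf_piLaw, ← Finset.mul_sum, ← Real.log_prod fun i _ => hfactor i, piLaw, piLaw]
  simp only [entRV_eq, hlog, Finset.sum_neg_distrib]
  rw [Finset.sum_comm]
  simp only [fun i => sum_piLaw_mul_apply hq i fun s => Real.log (distOf (q i) (A i) (A i s))]

lemma condEnt_piLaw {ι σ : Type*} [Fintype ι] [DecidableEq ι] [Fintype σ] {q : ι → σ → ℝ}
    (hq : ∀ i, IsPMF (q i)) (A : ι → σ → α) (C : ι → σ → γ) :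
    condEnt (piLaw q) (fun w i => A i (w i)) (fun w i => C i (w i)) =
      ∑ i, condEnt (q i) (A i) (C i) := by
  have h : InfoEquiv (piLaw q) (fun w => (fun i => A i (w i), fun i => C i (w i)))
      fun w i => (A i (w i), C i (w i)) :=
    fun w w' _ _ => by simp only [Prod.mk.injEq, funext_iff, forall_and]
  simp only [condEnt, Finset.sum_sub_distrib]
  rw [h.entRV_eq, entRV_piLaw hq fun i s => (A i s, C i s), entRV_piLaw hq C]

end Entropy

section SecureChannel

variable {𝒳 𝒴 𝒵 𝒢 Φ : Type} [Fintype 𝒳] [Fintype 𝒴] [DecidableEq 𝒴] [Fintype 𝒵]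
  [DecidableEq 𝒵] [Fintype 𝒢] [DecidableEq 𝒢] [Fintype Φ] [DecidableEq Φ] {pXY : 𝒳 × 𝒴 → ℝ}
  {f : 𝒳 → 𝒴 → 𝒵} {g : 𝒳 → 𝒴 → 𝒢} {κ : 𝒳 → Φ → ℝ}

/-- The joint law of `((X, Y), U)` when Alice sends `U` through the channel `κ(u|x)`, so that
`U − X − Y` is a Markov chain. -/
def channelLaw {𝒳 𝒴 Φ : Type} (pXY : 𝒳 × 𝒴 → ℝ) (κ : 𝒳 → Φ → ℝ) : (𝒳 × 𝒴) × Φ → ℝ :=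
  compProd pXY fun s => κ s.1

/-- A single-letter channel `κ(u|x)` from whose output Bob can compute `F`, with
`H(F | U, Y) = 0`, while learning nothing else about `G`, with `I(U; G | F, Y) = 0`. -/
structure IsSecureChannel (pXY : 𝒳 × 𝒴 → ℝ) (f : 𝒳 → 𝒴 → 𝒵) (g : 𝒳 → 𝒴 → 𝒢) (κ : 𝒳 → Φ → ℝ) :
    Prop where
  isPMF : ∀ x, IsPMF (κ x)
  condEnt_eq_zero : condEnt (channelLaw pXY κ) (fun ω => f ω.1.1 ω.1.2)
    (fun ω => (ω.2, ω.1.2)) = 0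
  condMutInfo_eq_zero : condMutInfo (channelLaw pXY κ) (fun ω => ω.2) (fun ω => g ω.1.1 ω.1.2)
    (fun ω => (f ω.1.1 ω.1.2, ω.1.2)) = 0

lemma IsSecureChannel.map_equiv {Ψ : Type} [Fintype Ψ] [DecidableEq Ψ]
    (h : IsSecureChannel pXY f g κ) (e : Φ ≃ Ψ) :
    IsSecureChannel pXY f g fun x => distOf (κ x) e := by
  classical
  have hlaw : channelLaw pXY (fun x => distOf (κ x) e) =
      distOf (channelLaw pXY κ) fun ω => (ω.1, e ω.2) :=
    (distOf_compProd_snd pXY (fun s => κ s.1) fun _ => e).symm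
  have he : InfoEquiv (channelLaw pXY κ) (fun ω => e ω.2) fun ω => ω.2 := fun _ _ _ _ =>
    e.injective.eq_iff
  refine ⟨fun x => (h.isPMF x).distOf e, ?_, ?_⟩
  · rw [hlaw, condEnt_distOf, ← h.condEnt_eq_zero]
    exact condEnt_congr (.refl _ _) (he.prodMk (.refl _ _))
  · rw [hlaw, condMutInfo_distOf, ← h.condMutInfo_eq_zero]
    exact condMutInfo_congr he (.refl _ _) (.refl _ _)

variable [DecidableEq 𝒳]

lemma IsSecureChannel.perfectlySecurelyComputableNI (hp : IsPMF pXY)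
    (h : IsSecureChannel pXY f g κ) : PerfectlySecurelyComputableNI pXY f g := by
  obtain ⟨κ', hκ', hF, hG⟩ : ∃ κ' : 𝒳 → Fin (Fintype.card Φ) → ℝ, IsSecureChannel pXY f g κ' :=
    ⟨_, h.map_equiv (Fintype.equivFin Φ)⟩
  exact ⟨_, fun x _ => κ' x, fun x _ => hκ' x,
    condMutInfo_compProd_eq_zero hp Prod.fst Prod.snd hκ', hF, hG⟩

lemma eq_channelLaw_of_condMutInfo_eq_zero {P : (𝒳 × 𝒴) × Φ → ℝ} (hP : IsPMF P)
    (h : condMutInfo P (fun ω => ω.2) (fun ω => ω.1.2) (fun ω => ω.1.1) = 0) :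
    ∃ κ : 𝒳 → Φ → ℝ, (∀ x, IsPMF (κ x)) ∧ P = channelLaw (distOf P Prod.fst) κ := by
  obtain ⟨κ, hκ⟩ := exists_isCondDist hP (fun ω => ω.2) fun ω => ω.1.1
  have hYX := (hκ.condMutInfo_eq_zero_iff hP.1 _).1 h
  refine ⟨κ, hκ.1, funext fun ω => ?_⟩
  have hinj : Function.Injective fun ω : (𝒳 × 𝒴) × Φ => (ω.2, ω.1.2, ω.1.1) := by
    rintro ⟨⟨x, y⟩, v⟩ ⟨⟨x', y'⟩, v'⟩ h
    simp_all
  have hswap : distOf P (fun ω => (ω.1.2, ω.1.1)) (ω.1.2, ω.1.1) = distOf P Prod.fst ω.1 :=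
    (congrFun (distOf_distOf P Prod.fst Prod.swap) ω.1.swap).symm.trans
      (distOf_apply_of_injective _ Prod.swap_injective ω.1)
  calc P ω = distOf P (fun ω => (ω.2, ω.1.2, ω.1.1)) (ω.2, ω.1.2, ω.1.1) :=
        (distOf_apply_of_injective P hinj ω).symm
    _ = distOf P (fun ω => (ω.1.2, ω.1.1)) (ω.1.2, ω.1.1) * κ ω.1.1 ω.2 := hYX.2 _ _
    _ = channelLaw (distOf P Prod.fst) κ ω := by rw [hswap, channelLaw, compProd]

lemma PerfectlySecurelyComputableNI.exists_isSecureChannel (hp : IsPMF pXY)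
    (h : PerfectlySecurelyComputableNI pXY f g) :
    ∃ (u : ℕ) (κ : 𝒳 → Fin u → ℝ), IsSecureChannel pXY f g κ := by
  obtain ⟨u, pU, hpU, hMarkov, hF, hG⟩ := h
  have hP : IsPMF (compProd pXY fun s => pU s.1 s.2) := hp.compProd fun s => hpU s.1 s.2
  obtain ⟨κ, hκ, hlaw⟩ := eq_channelLaw_of_condMutInfo_eq_zero hP hMarkov
  rw [distOf_compProd_fst pXY fun s => hpU s.1 s.2] at hlaw
  exact ⟨u, κ, hκ, hlaw ▸ hF, hlaw ▸ hG⟩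

end SecureChannel

section Protocol

variable {𝒳 𝒴 𝒵 𝒢 : Type} [Fintype 𝒳] [Fintype 𝒴] {pXY : 𝒳 × 𝒴 → ℝ} {f : 𝒳 → 𝒴 → 𝒵}
  {g : 𝒳 → 𝒴 → 𝒢} {n mM : ℕ}

/-- The joint law of `((Xⁿ, Yⁿ), M)` when Alice sends `M` with kernel `a(m|xⁿ)`. -/
def messageLaw {𝒳 𝒴 : Type} {n mM : ℕ} (pXY : 𝒳 × 𝒴 → ℝ) (a : (Fin n → 𝒳) → Fin mM → ℝ) :
    (Fin n → 𝒳 × 𝒴) × Fin mM → ℝ :=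
  compProd (piLaw fun _ => pXY) fun w => a fun i => (w i).1

lemma isPMF_messageLaw (hp : IsPMF pXY) {a : (Fin n → 𝒳) → Fin mM → ℝ} (ha : ∀ x, IsPMF (a x)) :
    IsPMF (messageLaw pXY a) :=
  (IsPMF.pi fun _ => hp).compProd fun _ => ha _

variable [DecidableEq 𝒳] [DecidableEq 𝒴]

lemma messageLaw_one (pXY : 𝒳 × 𝒴 → ℝ) (κ : 𝒳 → Fin mM → ℝ) :
    messageLaw (n := 1) pXY (fun x => κ (x 0)) =
      distOf (channelLaw pXY κ) fun ω => (fun _ => ω.1, ω.2) := by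
  have h := distOf_equiv (channelLaw pXY κ)
    ((Equiv.funUnique (Fin 1) (𝒳 × 𝒴)).symm.prodCongr (Equiv.refl _))
  refine Eq.trans (funext fun ω => ?_) h.symm
  simp [messageLaw, channelLaw, compProd, piLaw]

variable [DecidableEq 𝒵]

lemma jointNI_eq_distOf [Fintype 𝒵] (pXY : 𝒳 × 𝒴 → ℝ) (a : (Fin n → 𝒳) → Fin mM → ℝ)
    (b : Fin mM → (Fin n → 𝒴) → (Fin n → 𝒵) → ℝ) :
    jointNI pXY n mM a b =
      distOf (compProd (messageLaw pXY a) fun ω => b ω.2 fun i => (ω.1 i).2)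
        (Equiv.prodAssoc _ _ _) := by
  rw [distOf_equiv]
  rfl

lemma jointNI_one [Finite 𝒵] (pXY : 𝒳 × 𝒴 → ℝ) (κ : 𝒳 → Fin mM → ℝ) (d : Fin mM × 𝒴 → 𝒵) :
    jointNI pXY 1 mM (fun x => κ (x 0)) (fun m y => Pi.single (fun _ => d (m, y 0)) 1) =
      distOf (channelLaw pXY κ) fun ω => (fun _ => ω.1, ω.2, fun _ => d (ω.2, ω.1.2)) := by
  cases nonempty_fintype 𝒵
  rw [jointNI_eq_distOf, compProd_single, messageLaw_one, distOf_distOf, distOf_distOf]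
  rfl

variable [Fintype 𝒵] [Fintype 𝒢] [DecidableEq 𝒢]

lemma IsSecureChannel.asympSecurelyComputableNI (hp : IsPMF pXY) {κ : 𝒳 → Fin mM → ℝ}
    (h : IsSecureChannel pXY f g κ) : AsympSecurelyComputableNI pXY f g := by
  intro ε hε
  have hlaw : IsPMF (channelLaw pXY κ) := hp.compProd fun s => h.isPMF s.1
  obtain ⟨d, hd⟩ := (condEnt_eq_zero_iff hlaw _ _).1 h.condEnt_eq_zero
  refine ⟨1, mM, one_pos, fun x => κ (x 0), fun m y => Pi.single (fun _ => d (m, y 0)) 1,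
    fun x => h.isPMF (x 0), fun m y => isPMF_single _, ?_, ?_⟩
  · rw [jointNI_one, probOf_distOf, (probOf_eq_zero_iff hlaw.1 _).2 fun ω hω => ?_]
    · exact hε.le
    · simpa [funext_iff] using (hd ω hω).symm
  · calc _ = condMutInfo (channelLaw pXY κ) (fun ω => ω.2) (fun ω => g ω.1.1 ω.1.2)
          (fun ω => (f ω.1.1 ω.1.2, ω.1.2)) := by
          rw [jointNI_one, condMutInfo_distOf]
          refine condMutInfo_congr (.refl _ _) (fun _ _ _ _ => by simp [funext_iff])
            (fun ω ω' hω hω' => ?_)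
          simp [funext_iff, hd ω hω, hd ω' hω']
      _ ≤ (1 : ℕ) * ε := by
          rw [h.condMutInfo_eq_zero]
          positivity

end Protocol

section Continuity

variable {Ω α : Type*} [Fintype Ω]

lemma continuous_probOf (E : Ω → Prop) : Continuous fun p : Ω → ℝ => probOf p E := by
  classical
  simp only [probOf_eq_sum_mul]
  fun_prop

lemma continuous_distOf [DecidableEq α] (A : Ω → α) : Continuous fun p : Ω → ℝ => distOf p A := by
  refine continuous_pi fun a => continuous_finsetSum _ fun ω _ => ?_
  split_ifs
  · exact continuous_apply ω
  · exact continuous_const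

lemma continuous_entRV [Fintype α] [DecidableEq α] (A : Ω → α) :
    Continuous fun p : Ω → ℝ => entRV p A :=
  (continuous_finsetSum _ fun a _ =>
    Real.continuous_mul_log.comp ((continuous_apply a).comp (continuous_distOf A))).neg

lemma continuous_channelLaw {𝒳 𝒴 Φ : Type} (pXY : 𝒳 × 𝒴 → ℝ) :
    Continuous fun κ : 𝒳 → Φ → ℝ => channelLaw pXY κ :=
  continuous_pi fun _ => continuous_const.mul (continuous_apply_apply _ _)

lemma isCompact_setOf_forall_isPMF (Ω : Type*) (α : Type*) [Fintype α] :
    IsCompact {κ : Ω → α → ℝ | ∀ ω, IsPMF (κ ω)} := by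
  convert isCompact_univ_pi fun _ : Ω => isCompact_stdSimplex ℝ α using 1
  ext κ
  simp only [IsPMF, stdSimplex, Set.mem_ofPred_eq, Set.mem_univ_pi]

end Continuity

section Leakage

variable {𝒳 𝒴 𝒵 𝒢 Φ : Type} [Fintype 𝒳] [Fintype 𝒴] [DecidableEq 𝒴] [Fintype 𝒵]
  {pXY : 𝒳 × 𝒴 → ℝ} {f : 𝒳 → 𝒴 → 𝒵} {g : 𝒳 → 𝒴 → 𝒢}

/-- The probability that Bob fails when he applies the message `U : 𝒴 → 𝒵` that he receives
through the channel `κ` to `Y`. -/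
noncomputable def decodingError (pXY : 𝒳 × 𝒴 → ℝ) (f : 𝒳 → 𝒴 → 𝒵) (κ : 𝒳 → (𝒴 → 𝒵) → ℝ) : ℝ :=
  probOf (channelLaw pXY κ) fun ω => ω.2 ω.1.2 ≠ f ω.1.1 ω.1.2

lemma continuous_decodingError (pXY : 𝒳 × 𝒴 → ℝ) (f : 𝒳 → 𝒴 → 𝒵) :
    Continuous (decodingError pXY f) :=
  (continuous_probOf _).comp (continuous_channelLaw pXY)

variable [DecidableEq 𝒵] [Fintype 𝒢] [DecidableEq 𝒢] [Fintype Φ] [DecidableEq Φ]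

/-- How much more Bob knows about `G` from `(U, Y)` than from `(F, Y)`, namely
`H(G | F, Y) - H(G | U, Y)`; when `F` is a function of `(U, Y)` this is `I(U; G | F, Y)`. -/
noncomputable def leakage (pXY : 𝒳 × 𝒴 → ℝ) (f : 𝒳 → 𝒴 → 𝒵) (g : 𝒳 → 𝒴 → 𝒢)
    (κ : 𝒳 → Φ → ℝ) : ℝ :=
  condEnt pXY (fun s => g s.1 s.2) (fun s => (f s.1 s.2, s.2)) -
    condEnt (channelLaw pXY κ) (fun ω => g ω.1.1 ω.1.2) fun ω => (ω.2, ω.1.2)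

lemma continuous_leakage (pXY : 𝒳 × 𝒴 → ℝ) (f : 𝒳 → 𝒴 → 𝒵) (g : 𝒳 → 𝒴 → 𝒢) :
    Continuous fun κ : 𝒳 → Φ → ℝ => leakage pXY f g κ :=
  continuous_const.sub <| ((continuous_entRV _).comp (continuous_channelLaw pXY)).sub
    ((continuous_entRV _).comp (continuous_channelLaw pXY))

lemma leakage_eq_condMutInfo (f : 𝒳 → 𝒴 → 𝒵) (g : 𝒳 → 𝒴 → 𝒢) {κ : 𝒳 → Φ → ℝ}
    (hκ : ∀ x, IsPMF (κ x)) {d : Φ × 𝒴 → 𝒵}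
    (hd : ∀ ω, channelLaw pXY κ ω ≠ 0 → f ω.1.1 ω.1.2 = d (ω.2, ω.1.2)) :
    leakage pXY f g κ = condMutInfo (channelLaw pXY κ) (fun ω => ω.2) (fun ω => g ω.1.1 ω.1.2)
      fun ω => (f ω.1.1 ω.1.2, ω.1.2) := by
  classical
  have hUY : InfoEquiv (channelLaw pXY κ) (fun ω => (ω.2, f ω.1.1 ω.1.2, ω.1.2))
      fun ω => (ω.2, ω.1.2) := fun ω ω' hω hω' => by
    simp only [hd ω hω, hd ω' hω', Prod.mk.injEq, and_congr_right_iff, and_iff_right_iff_imp]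
    exact fun hU hY => by rw [hU, hY]
  have hXY : distOf (channelLaw pXY κ) Prod.fst = pXY := distOf_compProd_fst _ fun s => hκ s.1
  have hGFY := condEnt_distOf (channelLaw pXY κ) Prod.fst (fun s => g s.1 s.2)
    fun s => (f s.1 s.2, s.2)
  rw [hXY] at hGFY
  rw [condMutInfo_comm, condMutInfo_eq, condEnt_congr (.refl _ _) hUY, leakage, hGFY]

lemma isSecureChannel_of_le_zero (hp : IsPMF pXY) {κ : 𝒳 → (𝒴 → 𝒵) → ℝ} (hκ : ∀ x, IsPMF (κ x))
    (herr : decodingError pXY f κ ≤ 0) (hleak : leakage pXY f g κ ≤ 0) :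
    IsSecureChannel pXY f g κ := by
  have hlaw : IsPMF (channelLaw pXY κ) := hp.compProd fun s => hκ s.1
  have hF : ∀ ω, channelLaw pXY κ ω ≠ 0 → f ω.1.1 ω.1.2 = ω.2 ω.1.2 := fun ω hω =>
    (not_not.1 ((probOf_eq_zero_iff hlaw.1 _).1 (herr.antisymm (probOf_nonneg hlaw.1 _)) ω hω)).symm
  have hleak_eq := leakage_eq_condMutInfo f g hκ (d := fun c => c.1 c.2) hF
  exact ⟨hκ, (condEnt_eq_zero_iff hlaw _ _).2 ⟨fun c => c.1 c.2, hF⟩,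
    (hleak_eq ▸ hleak).antisymm (condMutInfo_nonneg hlaw _ _ _)⟩

/-- By compactness of the set of channels with values in the fixed alphabet `𝒴 → 𝒵`. -/
lemma exists_isSecureChannel_of_forall_pos (hp : IsPMF pXY)
    (h : ∀ ε > 0, ∃ κ : 𝒳 → (𝒴 → 𝒵) → ℝ,
      (∀ x, IsPMF (κ x)) ∧ decodingError pXY f κ ≤ ε ∧ leakage pXY f g κ ≤ ε) :
    ∃ κ : 𝒳 → (𝒴 → 𝒵) → ℝ, IsSecureChannel pXY f g κ := by
  obtain ⟨κ₁, hκ₁, -⟩ := h 1 one_pos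
  obtain ⟨κ, hκ, hmin⟩ := (isCompact_setOf_forall_isPMF 𝒳 (𝒴 → 𝒵)).exists_isMinOn ⟨κ₁, hκ₁⟩
    ((continuous_decodingError pXY f).max (continuous_leakage pXY f g)).continuousOn
  have hle : max (decodingError pXY f κ) (leakage pXY f g κ) ≤ 0 :=
    le_of_forall_pos_le_add fun ε hε => by
      obtain ⟨κ', hκ', herr, hleak⟩ := h ε hε
      exact (hmin hκ').trans ((max_le herr hleak).trans_eq (zero_add ε).symm)
  exact ⟨κ, isSecureChannel_of_le_zero hp hκ (max_le_iff.1 hle).1 (max_le_iff.1 hle).2⟩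

end Leakage

section SingleLetter

lemma card_mul_condEnt_le {Ω ι σ α β γ : Type*} [Fintype Ω] [Fintype ι] [DecidableEq ι] [Fintype σ]
    [DecidableEq σ] [Fintype α] [DecidableEq α] [Fintype β] [DecidableEq β] [Fintype γ]
    [DecidableEq γ] {P : Ω → ℝ} (hP : IsPMF P) {q : σ → ℝ} (hq : IsPMF q) {S : Ω → ι → σ}
    (hS : distOf P S = piLaw fun _ => q) (F : σ → α) (G : σ → β) (Y : σ → γ) (Z : Ω → ι → α) :
    Fintype.card ι * condEnt q G (fun s => (F s, Y s)) ≤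
      condEnt P (fun ω i => G (S ω i)) (fun ω => (Z ω, fun i => Y (S ω i))) +
        (Real.binEntropy (probOf P fun ω => Z ω ≠ fun i => F (S ω i)) +
          (probOf P fun ω => Z ω ≠ fun i => F (S ω i)) *
            (Fintype.card ι * Real.log (Fintype.card α))) := by
  have hFano := condEnt_le_binEntropy_add hP Z (fun ω i => (F (S ω i), Y (S ω i)))
    fun c i => (c i).1
  rw [Fintype.card_fun, Nat.cast_pow, Real.log_pow] at hFano
  have hsplit := condEnt_le_condEnt_add hP (fun ω i => G (S ω i)) Z
    (fun ω i => (F (S ω i), Y (S ω i))) fun c i => (c i).2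
  have hblock : condEnt P (fun ω i => G (S ω i)) (fun ω i => (F (S ω i), Y (S ω i))) =
      Fintype.card ι * condEnt q G fun s => (F s, Y s) := by
    rw [← condEnt_distOf P S (fun w i => G (w i)) fun w i => (F (w i), Y (w i)), hS,
      condEnt_piLaw (fun _ => hq) (fun _ => G) fun _ s => (F s, Y s)]
    simp
  linarith

/-- The function of `Yᵢ` alone that Bob's block decoder `D` applies to compute its `i`-th output,
once the message and the other coordinates of `Yⁿ` are fixed. It ignores the `i`-th coordinate of
its argument `y`, and it takes its values in an alphabet that does not depend on `n`. -/
def puncturedDecoder {ℳ 𝒴 𝒵 ι : Type*} [DecidableEq ι] (D : ℳ → (ι → 𝒴) → ι → 𝒵) (i : ι) (m : ℳ)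
    (y : ι → 𝒴) : 𝒴 → 𝒵 :=
  fun t => D m (Function.update y i t) i

lemma puncturedDecoder_update {ℳ 𝒴 𝒵 ι : Type*} [DecidableEq ι] (D : ℳ → (ι → 𝒴) → ι → 𝒵) (i : ι)
    (m : ℳ) (y : ι → 𝒴) (t : 𝒴) :
    puncturedDecoder D i m (Function.update y i t) = puncturedDecoder D i m y := by
  funext s
  rw [puncturedDecoder, puncturedDecoder, Function.update_idem]

lemma puncturedDecoder_apply_self {ℳ 𝒴 𝒵 ι : Type*} [DecidableEq ι] (D : ℳ → (ι → 𝒴) → ι → 𝒵)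
    (i : ι) (m : ℳ) (y : ι → 𝒴) : puncturedDecoder D i m y (y i) = D m y i := by
  rw [puncturedDecoder, Function.update_eq_self]

variable {𝒳 𝒴 𝒵 𝒢 : Type} [Fintype 𝒳] [Fintype 𝒴] [Fintype 𝒵] {pXY : 𝒳 × 𝒴 → ℝ}
  {f : 𝒳 → 𝒴 → 𝒵} {g : 𝒳 → 𝒴 → 𝒢} {n mM : ℕ} {a : (Fin n → 𝒳) → Fin mM → ℝ}
  {b : Fin mM → (Fin n → 𝒴) → (Fin n → 𝒵) → ℝ}

lemma isPMF_jointNI (hp : IsPMF pXY) (ha : ∀ x, IsPMF (a x)) (hb : ∀ m y, IsPMF (b m y)) :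
    IsPMF (jointNI pXY n mM a b) := by
  classical
  rw [jointNI_eq_distOf]
  exact ((isPMF_messageLaw hp ha).compProd fun _ => hb _ _).distOf _

lemma exists_blockDecoder (pXY : 𝒳 × 𝒴 → ℝ) (a : (Fin n → 𝒳) → Fin mM → ℝ)
    (hb : ∀ m y, IsPMF (b m y)) (F : (Fin n → 𝒳 × 𝒴) → Fin n → 𝒵) :
    ∃ D : Fin mM → (Fin n → 𝒴) → Fin n → 𝒵,
      probOf (messageLaw pXY a) (fun ω => (D ω.2 fun j => (ω.1 j).2) ≠ F ω.1) ≤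
        probOf (jointNI pXY n mM a b) fun ω => ω.2.2 ≠ F ω.1 := by
  classical
  obtain ⟨d, hd⟩ := exists_deterministic_estimator (messageLaw pXY a) (fun ω => F ω.1)
    (fun ω => (ω.2, fun j => (ω.1 j).2)) fun c : Fin mM × (Fin n → 𝒴) => hb c.1 c.2
  refine ⟨fun m y => d (m, y), hd.trans_eq ?_⟩
  rw [jointNI_eq_distOf, probOf_distOf]
  rfl

variable [DecidableEq 𝒴]

lemma distOf_jointNI [DecidableEq 𝒳] (pXY : 𝒳 × 𝒴 → ℝ) (a : (Fin n → 𝒳) → Fin mM → ℝ)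
    (hb : ∀ m y, IsPMF (b m y)) :
    distOf (jointNI pXY n mM a b) (fun ω => (ω.1, ω.2.1)) = messageLaw pXY a := by
  classical
  rw [jointNI_eq_distOf, distOf_distOf]
  exact distOf_compProd_fst _ fun _ => hb _ _

lemma distOf_jointNI_fst [DecidableEq 𝒳] (pXY : 𝒳 × 𝒴 → ℝ) (ha : ∀ x, IsPMF (a x))
    (hb : ∀ m y, IsPMF (b m y)) :
    distOf (jointNI pXY n mM a b) Prod.fst = piLaw fun _ => pXY := by
  have hfst := distOf_distOf (jointNI pXY n mM a b) (fun ω => (ω.1, ω.2.1)) Prod.fst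
  rw [distOf_jointNI pXY a hb] at hfst
  exact hfst.symm.trans (distOf_compProd_fst _ fun _ => ha _)

/-- Given `Xᵢ`, Alice can sample `U` herself: she draws the pairs `(Xⱼ, Yⱼ)`, `j ≠ i`, as private
randomness, and neither the message nor `U` looks at `Yᵢ`. -/
lemma exists_channelLaw [DecidableEq 𝒳] {Φ : Type} [Fintype Φ] [DecidableEq Φ] (hp : IsPMF pXY)
    (ha : ∀ x, IsPMF (a x)) (i : Fin n) {U : Fin mM → (Fin n → 𝒴) → Φ}
    (hU : ∀ m y t, U m (Function.update y i t) = U m y) :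
    ∃ κ : 𝒳 → Φ → ℝ, (∀ x, IsPMF (κ x)) ∧
      distOf (messageLaw pXY a) (fun ω => (ω.1 i, U ω.2 fun j => (ω.1 j).2)) =
        channelLaw pXY κ := by
  have hq : ∀ _ : Fin n, IsPMF pXY := fun _ => hp
  let κ (x : 𝒳) := distOf (compProd (piLaw fun _ : Fin n => pXY) fun w =>
    distOf (a (Function.update (fun j => (w j).1) i x)) fun m => U m fun j => (w j).2) Prod.snd
  refine ⟨κ, fun x => ((IsPMF.pi hq).compProd fun w => (ha _).distOf _).distOf _, ?_⟩
  have hupdate (w : Fin n → 𝒳 × 𝒴) (s : 𝒳 × 𝒴) :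
      (distOf (a fun j => (Function.update w i s j).1) fun m =>
        U m fun j => (Function.update w i s j).2) =
      distOf (a (Function.update (fun j => (w j).1) i s.1)) fun m => U m fun j => (w j).2 := by
    have hX : (fun j => (Function.update w i s j).1) = Function.update (fun j => (w j).1) i s.1 :=
      Function.comp_update Prod.fst w i s
    have hY : (fun j => (Function.update w i s j).2) = Function.update (fun j => (w j).2) i s.2 :=
      Function.comp_update Prod.snd w i s
    simp only [hX, hY, hU]
  calc distOf (messageLaw pXY a) (fun ω => (ω.1 i, U ω.2 fun j => (ω.1 j).2))
      = distOf (distOf (messageLaw pXY a) fun ω => (ω.1, U ω.2 fun j => (ω.1 j).2))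
          fun ω => (ω.1 i, ω.2) := by rw [distOf_distOf]
    _ = distOf (compProd (piLaw fun _ => pXY) fun w =>
          distOf (a fun j => (w j).1) fun m => U m fun j => (w j).2) fun ω => (ω.1 i, ω.2) := by
        rw [messageLaw, distOf_compProd_snd _ _ fun (w : Fin n → 𝒳 × 𝒴) m => U m fun j => (w j).2]
    _ = channelLaw pXY κ := by
        rw [distOf_compProd_apply hq, channelLaw]
        simp only [hupdate]
        rfl

lemma exists_channelLaw_puncturedDecoder [DecidableEq 𝒳] [DecidableEq 𝒵] (hp : IsPMF pXY)
    (ha : ∀ x, IsPMF (a x)) (D : Fin mM → (Fin n → 𝒴) → Fin n → 𝒵) (i : Fin n) :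
    ∃ κ : 𝒳 → (𝒴 → 𝒵) → ℝ, (∀ x, IsPMF (κ x)) ∧
      distOf (messageLaw pXY a) (fun ω => (ω.1 i, puncturedDecoder D i ω.2 fun j => (ω.1 j).2)) =
        channelLaw pXY κ :=
  exists_channelLaw hp ha i (puncturedDecoder_update D i)

lemma decodingError_le [DecidableEq 𝒳] [DecidableEq 𝒵] (hp : IsPMF pXY)
    (ha : ∀ x, IsPMF (a x)) (D : Fin mM → (Fin n → 𝒴) → Fin n → 𝒵) {i : Fin n} {κ : 𝒳 → (𝒴 → 𝒵) → ℝ}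
    (hκ : distOf (messageLaw pXY a)
      (fun ω => (ω.1 i, puncturedDecoder D i ω.2 fun j => (ω.1 j).2)) = channelLaw pXY κ) :
    decodingError pXY f κ ≤ probOf (messageLaw pXY a) fun ω =>
      (D ω.2 fun j => (ω.1 j).2) ≠ fun j => f (ω.1 j).1 (ω.1 j).2 := by
  rw [decodingError, ← hκ, probOf_distOf]
  refine probOf_mono (isPMF_messageLaw hp ha).1 fun ω hne heq => hne ?_
  rw [← congrFun heq i]
  exact puncturedDecoder_apply_self D i ω.2 _

variable [DecidableEq 𝒵] [Fintype 𝒢] [DecidableEq 𝒢]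

lemma sum_leakage_le [DecidableEq 𝒳] (hp : IsPMF pXY) (ha : ∀ x, IsPMF (a x)) (f : 𝒳 → 𝒴 → 𝒵)
    (g : 𝒳 → 𝒴 → 𝒢) (D : Fin mM → (Fin n → 𝒴) → Fin n → 𝒵) {κ : Fin n → 𝒳 → (𝒴 → 𝒵) → ℝ}
    (hκ : ∀ i, distOf (messageLaw pXY a)
      (fun ω => (ω.1 i, puncturedDecoder D i ω.2 fun j => (ω.1 j).2)) = channelLaw pXY (κ i)) :
    ∑ i, leakage pXY f g (κ i) ≤
      n * condEnt pXY (fun s => g s.1 s.2) (fun s => (f s.1 s.2, s.2)) -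
        condEnt (messageLaw pXY a) (fun ω i => g (ω.1 i).1 (ω.1 i).2)
          fun ω => (ω.2, fun j => (ω.1 j).2) := by
  have hpi := condEnt_pi_le (isPMF_messageLaw hp ha) (fun ω i => g (ω.1 i).1 (ω.1 i).2)
    (fun ω => (ω.2, fun j => (ω.1 j).2)) fun i c => (puncturedDecoder D i c.1 c.2, c.2 i)
  have hterm (i : Fin n) := condEnt_distOf (messageLaw pXY a)
    (fun ω => (ω.1 i, puncturedDecoder D i ω.2 fun j => (ω.1 j).2))
    (fun ω => g ω.1.1 ω.1.2) fun ω => (ω.2, ω.1.2)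
  simp only [hκ] at hterm
  have hsum : ∑ i, leakage pXY f g (κ i) =
      n * condEnt pXY (fun s => g s.1 s.2) (fun s => (f s.1 s.2, s.2)) -
        ∑ i, condEnt (messageLaw pXY a) (fun ω => g (ω.1 i).1 (ω.1 i).2)
          fun ω => (puncturedDecoder D i ω.2 fun j => (ω.1 j).2, (ω.1 i).2) := by
    simp [leakage, Finset.sum_sub_distrib, hterm]
  rw [hsum]
  exact sub_le_sub_left hpi _

lemma condEnt_jointNI_le_condEnt_messageLaw (hp : IsPMF pXY) (ha : ∀ x, IsPMF (a x))
    (hb : ∀ m y, IsPMF (b m y)) (g : 𝒳 → 𝒴 → 𝒢) :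
    condEnt (jointNI pXY n mM a b) (fun ω i => g (ω.1 i).1 (ω.1 i).2)
        (fun ω => (ω.2.1, ω.2.2, fun i => (ω.1 i).2)) ≤
      condEnt (messageLaw pXY a) (fun ω i => g (ω.1 i).1 (ω.1 i).2)
        fun ω => (ω.2, fun i => (ω.1 i).2) := by
  classical
  have hmarginal := condEnt_distOf (jointNI pXY n mM a b) (fun ω => (ω.1, ω.2.1))
    (fun ω i => g (ω.1 i).1 (ω.1 i).2) fun ω => (ω.2, fun i => (ω.1 i).2)
  rw [distOf_jointNI pXY a hb] at hmarginal
  rw [hmarginal]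
  exact condEnt_le_condEnt_comp (isPMF_jointNI hp ha hb) (fun ω i => g (ω.1 i).1 (ω.1 i).2)
    (fun ω => (ω.2.1, ω.2.2, fun i => (ω.1 i).2)) fun c => (c.1, c.2.2)

lemma mul_condEnt_sub_condEnt_messageLaw_le (hp : IsPMF pXY) (ha : ∀ x, IsPMF (a x))
    (hb : ∀ m y, IsPMF (b m y)) (f : 𝒳 → 𝒴 → 𝒵) (g : 𝒳 → 𝒴 → 𝒢) {e : ℝ}
    (he : e = probOf (jointNI pXY n mM a b) fun ω => ω.2.2 ≠ fun i => f (ω.1 i).1 (ω.1 i).2) :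
    n * condEnt pXY (fun s => g s.1 s.2) (fun s => (f s.1 s.2, s.2)) -
        condEnt (messageLaw pXY a) (fun ω i => g (ω.1 i).1 (ω.1 i).2)
          (fun ω => (ω.2, fun i => (ω.1 i).2)) ≤
      condMutInfo (jointNI pXY n mM a b) (fun ω => ω.2.1) (fun ω i => g (ω.1 i).1 (ω.1 i).2)
        (fun ω => (ω.2.2, fun i => (ω.1 i).2)) +
        (Real.binEntropy e + e * (n * Real.log (Fintype.card 𝒵))) := by
  classical
  have hblock := card_mul_condEnt_le (isPMF_jointNI hp ha hb) hp (distOf_jointNI_fst pXY ha hb)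
    (fun s => f s.1 s.2) (fun s => g s.1 s.2) Prod.snd fun ω => ω.2.2
  rw [← he, Fintype.card_fin] at hblock
  have hdrop := condEnt_jointNI_le_condEnt_messageLaw hp ha hb g
  rw [condMutInfo_comm, condMutInfo_eq]
  linarith

/-- A block protocol yields one single-letter channel for each coordinate, and the one that leaks
least is as good as the average. -/
lemma exists_channel_of_protocol (hn : 0 < n) (hp : IsPMF pXY) (ha : ∀ x, IsPMF (a x))
    (hb : ∀ m y, IsPMF (b m y)) (f : 𝒳 → 𝒴 → 𝒵) (g : 𝒳 → 𝒴 → 𝒢) {e : ℝ}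
    (he : e = probOf (jointNI pXY n mM a b) fun ω => ω.2.2 ≠ fun i => f (ω.1 i).1 (ω.1 i).2) :
    ∃ κ : 𝒳 → (𝒴 → 𝒵) → ℝ, (∀ x, IsPMF (κ x)) ∧ decodingError pXY f κ ≤ e ∧
      n * leakage pXY f g κ ≤
        condMutInfo (jointNI pXY n mM a b) (fun ω => ω.2.1) (fun ω i => g (ω.1 i).1 (ω.1 i).2)
          (fun ω => (ω.2.2, fun i => (ω.1 i).2)) +
          (Real.binEntropy e + e * (n * Real.log (Fintype.card 𝒵))) := by
  classical
  have : Nonempty (Fin n) := ⟨⟨0, hn⟩⟩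
  obtain ⟨D, hD⟩ := exists_blockDecoder pXY a hb fun w i => f (w i).1 (w i).2
  choose κ hκ hlaw using exists_channelLaw_puncturedDecoder hp ha D
  obtain ⟨i, hi⟩ := Finite.exists_min fun i => leakage pXY f g (κ i)
  have hsum := (sum_leakage_le hp ha f g D hlaw).trans
    (mul_condEnt_sub_condEnt_messageLaw_le hp ha hb f g he)
  refine ⟨κ i, hκ i, (decodingError_le hp ha D (hlaw i)).trans (hD.trans_eq he.symm),
    le_trans ?_ hsum⟩
  simpa using Finset.card_nsmul_le_sum Finset.univ _ _ fun j _ => hi j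

lemma AsympSecurelyComputableNI.exists_channel [DecidableEq 𝒳] (hp : IsPMF pXY)
    (h : AsympSecurelyComputableNI pXY f g) {δ : ℝ} (hδ : 0 < δ) (hδ_half : δ ≤ 2⁻¹) :
    ∃ κ : 𝒳 → (𝒴 → 𝒵) → ℝ, (∀ x, IsPMF (κ x)) ∧ decodingError pXY f κ ≤ δ ∧
      leakage pXY f g κ ≤ δ + Real.binEntropy δ + δ * Real.log (Fintype.card 𝒵) := by
  obtain ⟨n, mM, hn, a, b, ha, hb, herr, hleak⟩ := h δ hδ
  obtain ⟨κ, hκ, hκ_err, hκ_leak⟩ := exists_channel_of_protocol hn hp ha hb f g rfl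
  refine ⟨κ, hκ, hκ_err.trans herr, ?_⟩
  set e := probOf (jointNI pXY n mM a b) fun ω => ω.2.2 ≠ fun i => f (ω.1 i).1 (ω.1 i).2
  have he : 0 ≤ e := probOf_nonneg (isPMF_jointNI hp ha hb).1 _
  have hn_one : (1 : ℝ) ≤ n := Nat.one_le_cast.2 hn
  have hentropy : Real.binEntropy e ≤ n * Real.binEntropy δ :=
    calc Real.binEntropy e ≤ Real.binEntropy δ :=
          Real.binEntropy_strictMonoOn.monotoneOn ⟨he, herr.trans hδ_half⟩ ⟨hδ.le, hδ_half⟩ herr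
      _ ≤ n * Real.binEntropy δ :=
          le_mul_of_one_le_left (Real.binEntropy_nonneg hδ.le (by linarith)) hn_one
  refine le_of_mul_le_mul_left ?_ (zero_lt_one.trans_le hn_one)
  calc n * leakage pXY f g κ
      ≤ n * δ + (n * Real.binEntropy δ + δ * (n * Real.log (Fintype.card 𝒵))) := by
        refine hκ_leak.trans (add_le_add hleak (add_le_add hentropy ?_))
        gcongr
    _ = n * (δ + Real.binEntropy δ + δ * Real.log (Fintype.card 𝒵)) := by ring

open Topology in
lemma AsympSecurelyComputableNI.exists_isSecureChannel [DecidableEq 𝒳] (hp : IsPMF pXY)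
    (h : AsympSecurelyComputableNI pXY f g) :
    ∃ κ : 𝒳 → (𝒴 → 𝒵) → ℝ, IsSecureChannel pXY f g κ := by
  refine exists_isSecureChannel_of_forall_pos hp fun ε hε => ?_
  have hcont : Continuous fun δ => δ + Real.binEntropy δ + δ * Real.log (Fintype.card 𝒵) :=
    (continuous_id.add Real.binEntropy_continuous).add (continuous_id.mul continuous_const)
  have hbound : ∀ᶠ δ in 𝓝[>] (0 : ℝ), δ + Real.binEntropy δ + δ * Real.log (Fintype.card 𝒵) ≤ ε :=
    ((hcont.tendsto' 0 0 (by simp)).mono_left nhdsWithin_le_nhds).eventually_le_const hε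
  have hsmall : ∀ᶠ δ in 𝓝[>] (0 : ℝ), δ ∈ Set.Ioc 0 (min 2⁻¹ ε) :=
    Ioc_mem_nhdsGT (lt_min (by norm_num) hε)
  obtain ⟨δ, hδ_bound, hδ, hδ_le⟩ := (hbound.and hsmall).exists
  obtain ⟨hδ_half, hδε⟩ := le_min_iff.1 hδ_le
  obtain ⟨κ, hκ, herr, hleak⟩ := h.exists_channel hp hδ hδ_half
  exact ⟨κ, hκ, herr.trans hδε, hleak.trans hδ_bound⟩

end SingleLetter

/-- **Theorem 2.** When privacy is required only against Bob, who computes a function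
based on a single transmission from Alice, asymptotically secure computability is
equivalent to perfectly secure computability. -/
theorem asymp_iff_perfect {𝒳 𝒴 𝒵 𝒢 : Type}
    [Fintype 𝒳] [DecidableEq 𝒳] [Fintype 𝒴] [DecidableEq 𝒴]
    [Fintype 𝒵] [DecidableEq 𝒵] [Fintype 𝒢] [DecidableEq 𝒢]
    (pXY : 𝒳 × 𝒴 → ℝ) (hp : IsPMF pXY)
    (f : 𝒳 → 𝒴 → 𝒵) (g : 𝒳 → 𝒴 → 𝒢) :
    AsympSecurelyComputableNI pXY f g ↔ PerfectlySecurelyComputableNI pXY f g := by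
  constructor
  · intro h
    obtain ⟨κ, hκ⟩ := h.exists_isSecureChannel hp
    exact hκ.perfectlySecurelyComputableNI hp
  · intro h
    obtain ⟨u, κ, hκ⟩ := h.exists_isSecureChannel hp
    exact hκ.asympSecurelyComputableNI hp
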